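/- For system (m1) with a = 2 and b = 1, if the parameters lie on the bifurcation parabola p·μ₂² + 4μ₁ = 0, then (−μ₂/2, π) is an equilibrium of the system and the Jacobian matrix of the vector field at this equilibrium has both trace and determinant equal to zero, so both eigenvalues of the linearization are zero (the equilibrium O₂± has become a degenerate double equilibrium). -/

import Mathlib

open Real Polynomial

/-- An equilibrium of system (m1): both right-hand sides
`(a + μ₁u)·sin v` and `p·(b·u² + μ₂·u) + μ₁·cos v` vanish. -/
def IsM1Equil (a b μ₁ μ₂ : ℝ) (p : ℕ) (q : ℝ × ℝ) : Prop :=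
  (a + μ₁ * q.1) * Real.sin q.2 = 0 ∧
  (p : ℝ) * (b * q.1 ^ 2 + μ₂ * q.1) + μ₁ * Real.cos q.2 = 0

/-- The Jacobian matrix of the vector field of system (m1) at the point `(u, v)`:
the 2×2 matrix of partial derivatives of the right-hand sides with respect to
`u` and `v`. -/
noncomputable def m1Jacobian (a b μ₁ μ₂ : ℝ) (p : ℕ) (u v : ℝ) :
    Matrix (Fin 2) (Fin 2) ℝ :=
  !![deriv (fun u' : ℝ => (a + μ₁ * u') * Real.sin v) u,
     deriv (fun v' : ℝ => (a + μ₁ * u) * Real.sin v') v;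
     deriv (fun u' : ℝ => (p : ℝ) * (b * u' ^ 2 + μ₂ * u') + μ₁ * Real.cos v) u,
     deriv (fun v' : ℝ => (p : ℝ) * (b * u ^ 2 + μ₂ * u) + μ₁ * Real.cos v') v]

/-!
The divergence of the field is `μ₁ sin v - μ₁ sin v = 0` everywhere, so the Jacobian is traceless
and the determinant alone decides the linearization. On the line `v = π` the equilibria are the
roots of the quadratic `p (b u² + μ₂ u) - μ₁`, and there the determinant is `a + μ₁ u` times the
derivative of that quadratic. The parabola `p μ₂² + 4 b μ₁ = 0` is where the two roots collide
at the vertex `u = -μ₂ / (2 b)`, and at a double root the derivative vanishes.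
-/

theorem charpoly_fin_two_of_trace_eq_zero {R : Type*} [CommRing R]
    {M : Matrix (Fin 2) (Fin 2) R} (hM : M.trace = 0) : M.charpoly = X ^ 2 + C M.det := by
  nontriviality R
  rw [Matrix.charpoly_fin_two, hM, C_0, zero_mul, sub_zero]

section Jacobian

variable (a b μ₁ μ₂ : ℝ) (p : ℕ) (u v : ℝ)

theorem m1Jacobian_eq :
    m1Jacobian a b μ₁ μ₂ p u v =
      !![μ₁ * sin v, (a + μ₁ * u) * cos v; p * (2 * b * u + μ₂), -(μ₁ * sin v)] := by
  have deriv_fst_u : HasDerivAt (fun u' ↦ (a + μ₁ * u') * sin v) (μ₁ * sin v) u := by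
    simpa using (((hasDerivAt_id u).const_mul μ₁).const_add a).mul_const (sin v)
  have deriv_fst_v : HasDerivAt (fun v' ↦ (a + μ₁ * u) * sin v') ((a + μ₁ * u) * cos v) v :=
    (hasDerivAt_sin v).const_mul _
  have deriv_snd_u : HasDerivAt (fun u' ↦ p * (b * u' ^ 2 + μ₂ * u') + μ₁ * cos v)
      (p * (2 * b * u + μ₂)) u := by
    have quadratic : HasDerivAt (fun u' ↦ b * u' ^ 2 + μ₂ * u') (b * (2 * u) + μ₂) u := by
      simpa using ((hasDerivAt_pow 2 u).const_mul b).fun_add ((hasDerivAt_id u).const_mul μ₂)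
    exact ((quadratic.const_mul (p : ℝ)).add_const (μ₁ * cos v)).congr_deriv (by ring)
  have deriv_snd_v : HasDerivAt (fun v' ↦ p * (b * u ^ 2 + μ₂ * u) + μ₁ * cos v')
      (-(μ₁ * sin v)) v := by
    simpa using ((hasDerivAt_cos v).const_mul μ₁).const_add (p * (b * u ^ 2 + μ₂ * u))
  rw [m1Jacobian, deriv_fst_u.deriv, deriv_fst_v.deriv, deriv_snd_u.deriv, deriv_snd_v.deriv]

theorem trace_m1Jacobian : (m1Jacobian a b μ₁ μ₂ p u v).trace = 0 := by
  rw [m1Jacobian_eq, Matrix.trace_fin_two_of, add_neg_cancel]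

theorem det_m1Jacobian_pi :
    (m1Jacobian a b μ₁ μ₂ p u π).det = (a + μ₁ * u) * (p * (2 * b * u + μ₂)) := by
  rw [m1Jacobian_eq, Matrix.det_fin_two_of, sin_pi, cos_pi]
  ring

theorem charpoly_m1Jacobian :
    (m1Jacobian a b μ₁ μ₂ p u v).charpoly = X ^ 2 + C (m1Jacobian a b μ₁ μ₂ p u v).det :=
  charpoly_fin_two_of_trace_eq_zero (trace_m1Jacobian a b μ₁ μ₂ p u v)

end Jacobian

theorem isM1Equil_pi_iff (a b μ₁ μ₂ : ℝ) (p : ℕ) (u : ℝ) :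
    IsM1Equil a b μ₁ μ₂ p (u, π) ↔ p * (b * u ^ 2 + μ₂ * u) - μ₁ = 0 := by
  simp only [IsM1Equil, sin_pi, cos_pi, mul_zero, true_and, mul_neg_one, sub_eq_add_neg]

section Vertex

variable (a : ℝ) {b : ℝ} (μ₁ μ₂ : ℝ) (p : ℕ)

theorem isM1Equil_vertex_pi_iff (hb : b ≠ 0) :
    IsM1Equil a b μ₁ μ₂ p (-μ₂ / (2 * b), π) ↔ p * μ₂ ^ 2 + 4 * b * μ₁ = 0 := by
  have value_at_vertex : p * (b * (-μ₂ / (2 * b)) ^ 2 + μ₂ * (-μ₂ / (2 * b))) - μ₁ =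
      -(p * μ₂ ^ 2 + 4 * b * μ₁) / (4 * b) := by
    field_simp
    ring
  rw [isM1Equil_pi_iff, value_at_vertex, div_eq_zero_iff, neg_eq_zero,
    or_iff_left (mul_ne_zero four_ne_zero hb)]

theorem det_m1Jacobian_vertex_pi (hb : b ≠ 0) :
    (m1Jacobian a b μ₁ μ₂ p (-μ₂ / (2 * b)) π).det = 0 := by
  have slope_at_vertex : 2 * b * (-μ₂ / (2 * b)) + μ₂ = 0 := by
    rw [mul_div_cancel₀ _ (mul_ne_zero two_ne_zero hb), neg_add_cancel]
  rw [det_m1Jacobian_pi, slope_at_vertex, mul_zero, mul_zero]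

end Vertex

theorem stmt_10_general (a : ℝ) {b : ℝ} (hb : b ≠ 0) (μ₁ μ₂ : ℝ) (p : ℕ)
    (h : p * μ₂ ^ 2 + 4 * b * μ₁ = 0) :
    IsM1Equil a b μ₁ μ₂ p (-μ₂ / (2 * b), π) ∧
    (m1Jacobian a b μ₁ μ₂ p (-μ₂ / (2 * b)) π).trace = 0 ∧
    (m1Jacobian a b μ₁ μ₂ p (-μ₂ / (2 * b)) π).det = 0 ∧
    (m1Jacobian a b μ₁ μ₂ p (-μ₂ / (2 * b)) π).charpoly = X ^ 2 := by
  have det_eq_zero := det_m1Jacobian_vertex_pi a μ₁ μ₂ p hb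
  refine ⟨(isM1Equil_vertex_pi_iff a μ₁ μ₂ p hb).2 h, trace_m1Jacobian .., det_eq_zero, ?_⟩
  rw [charpoly_m1Jacobian, det_eq_zero, C_0, add_zero]

/-- for system (m1) with `a = 2`, `b = 1`, on the bifurcation
parabola `p·μ₂² + 4μ₁ = 0` the point `(−μ₂/2, π)` is an equilibrium whose
Jacobian matrix has zero trace and zero determinant, hence both eigenvalues of
the linearization are zero (its characteristic polynomial is `λ²`). -/
theorem stmt_10 (μ₁ μ₂ : ℝ) (p : ℕ) (hp : 0 < p)
    (h : (p : ℝ) * μ₂ ^ 2 + 4 * μ₁ = 0) :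
    IsM1Equil 2 1 μ₁ μ₂ p (-μ₂ / 2, π) ∧
    (m1Jacobian 2 1 μ₁ μ₂ p (-μ₂ / 2) π).trace = 0 ∧
    (m1Jacobian 2 1 μ₁ μ₂ p (-μ₂ / 2) π).det = 0 ∧
    (m1Jacobian 2 1 μ₁ μ₂ p (-μ₂ / 2) π).charpoly = X ^ 2 := by
  simpa only [mul_one] using
    stmt_10_general 2 one_ne_zero μ₁ μ₂ p (by simpa only [mul_one] using h)
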